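/- Let K be a field of characteristic 0 and for each m ≥ 0 let δ_m be the derivation of K⟨X,Y⟩ with δ_m(X) = 0 and δ_m(Y) = Xᵐ. If P ∈ K⟨X,Y⟩ satisfies δ_m(P) = 0 for all m ≥ 0, then P lies in the subalgebra of K⟨X,Y⟩ generated by X and T₁ = YX − XY. -/

import Mathlib

namespace DeltaConst

open MvPolynomial

variable {K : Type*} [Field K]


/-- multiplication by the first variable -/
noncomputable def opX : Module.End K ((ℕ → MvPolynomial ℕ K) → ℕ → MvPolynomial ℕ K) where
  toFun F := fun x n => x 0 * F x n
  map_add' F G := by funext x n; simp [mul_add]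
  map_smul' c F := by funext x n; simp

/-- shift -/
noncomputable def opY : Module.End K ((ℕ → MvPolynomial ℕ K) → ℕ → MvPolynomial ℕ K) where
  toFun F := fun x n => match n with
    | 0 => 0
    | n + 1 => F (fun i => x (i + 1)) n
  map_add' F G := by funext x n; cases n <;> simp
  map_smul' c F := by funext x n; cases n <;> simp

/-- the action -/
noncomputable def act : FreeAlgebra K (Fin 2) →ₐ[K]
    Module.End K ((ℕ → MvPolynomial ℕ K) → ℕ → MvPolynomial ℕ K) :=
  FreeAlgebra.lift K ![opX, opY]

/-- the polynomial attached to the Y-degree n component, at a sequence x -/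
noncomputable def Fp (P : FreeAlgebra K (Fin 2)) (x : ℕ → MvPolynomial ℕ K) (n : ℕ) :
    MvPolynomial ℕ K :=
  act P (fun _ n => if n = 0 then 1 else 0) x n

lemma Fp_add (P Q : FreeAlgebra K (Fin 2)) (x n) : Fp (P + Q) x n = Fp P x n + Fp Q x n := by
  simp [Fp]

lemma Fp_smul (c : K) (P : FreeAlgebra K (Fin 2)) (x n) : Fp (c • P) x n = c • Fp P x n := by
  simp [Fp]

lemma Fp_one (x : ℕ → MvPolynomial ℕ K) (n) : Fp (1 : FreeAlgebra K (Fin 2)) x n = if n = 0 then 1 else 0 := by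
  simp [Fp]

lemma Fp_X (P : FreeAlgebra K (Fin 2)) (x n) :
    Fp (FreeAlgebra.ι K 0 * P) x n = x 0 * Fp P x n := by
  simp [Fp, act, opX]

lemma Fp_Xpow (m : ℕ) (P : FreeAlgebra K (Fin 2)) (x n) :
    Fp (FreeAlgebra.ι K 0 ^ m * P) x n = x 0 ^ m * Fp P x n := by
  induction m with
  | zero => simp
  | succ m ih => rw [pow_succ', mul_assoc, Fp_X, ih, pow_succ', mul_assoc]

lemma Fp_Y_zero (P : FreeAlgebra K (Fin 2)) (x) :
    Fp (FreeAlgebra.ι K 1 * P) x 0 = 0 := by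
  simp [Fp, act, opY]

lemma Fp_Y_succ (P : FreeAlgebra K (Fin 2)) (x n) :
    Fp (FreeAlgebra.ι K 1 * P) x (n + 1) = Fp P (fun i => x (i + 1)) n := by
  simp [Fp, act, opY]

/-- left induction -/
lemma left_ind {p : FreeAlgebra K (Fin 2) → Prop} (h1 : p 1)
    (hadd : ∀ a b, p a → p b → p (a + b)) (hsmul : ∀ (c : K) a, p a → p (c • a))
    (hX : ∀ a, p a → p (FreeAlgebra.ι K 0 * a)) (hY : ∀ a, p a → p (FreeAlgebra.ι K 1 * a))
    (P : FreeAlgebra K (Fin 2)) : p P := by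
  suffices H : ∀ a, p a → p (P * a) by simpa using H 1 h1
  induction P using FreeAlgebra.induction with
  | grade0 r => intro a ha; rw [← Algebra.smul_def]; exact hsmul _ _ ha
  | grade1 i =>
    fin_cases i
    · exact hX
    · exact hY
  | mul u v hu hv => intro a ha; rw [mul_assoc]; exact hu _ (hv _ ha)
  | add u v hu hv => intro a ha; rw [add_mul]; exact hadd _ _ (hu _ ha) (hv _ ha)

lemma Fp_nat (g : MvPolynomial ℕ K →ₐ[K] MvPolynomial ℕ K) (P : FreeAlgebra K (Fin 2)) :
    ∀ x n, g (Fp P x n) = Fp P (fun i => g (x i)) n := by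
  induction P using left_ind with
  | h1 => intro x n; rw [Fp_one, Fp_one]; split_ifs <;> simp
  | hadd a b ha hb => intro x n; simp [Fp_add, ha, hb]
  | hsmul c a ha => intro x n; simp [Fp_smul, ha]
  | hX a ha => intro x n; simp [Fp_X, ha]
  | hY a ha =>
    intro x n
    cases n with
    | zero => simp [Fp_Y_zero]
    | succ n => simp [Fp_Y_succ, ha]

/-- double the k-th entry -/
def dbl {R : Type*} (k : ℕ) (x : ℕ → R) : ℕ → R := fun j => if j ≤ k then x j else x (j - 1)

lemma dbl_zero {R : Type*} (k : ℕ) (x : ℕ → R) : dbl k x 0 = x 0 := by simp [dbl]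

lemma dbl_shift_zero {R : Type*} (x : ℕ → R) : (fun i => dbl 0 x (i + 1)) = x := by
  funext i; simp [dbl]

lemma dbl_shift_succ {R : Type*} (k : ℕ) (x : ℕ → R) :
    (fun i => dbl (k + 1) x (i + 1)) = dbl k (fun i => x (i + 1)) := by
  funext i
  simp only [dbl, add_le_add_iff_right]
  split_ifs with h
  · rfl
  · congr 1; omega

lemma Fp_delta (m : ℕ) (δ : FreeAlgebra K (Fin 2) →ₗ[K] FreeAlgebra K (Fin 2))
    (hδ : ∀ a b : FreeAlgebra K (Fin 2), δ (a * b) = δ a * b + a * δ b)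
    (hX : δ (FreeAlgebra.ι K 0) = 0) (hY : δ (FreeAlgebra.ι K 1) = FreeAlgebra.ι K 0 ^ m)
    (P : FreeAlgebra K (Fin 2)) : ∀ x n,
    Fp (δ P) x n = ∑ i ∈ Finset.range (n + 1), x i ^ m * Fp P (dbl i x) (n + 1) := by
  have h0 : ∀ x n, Fp (0 : FreeAlgebra K (Fin 2)) x n = 0 := by intro x n; simp [Fp]
  induction P using left_ind with
  | h1 =>
    intro x n
    have : δ 1 = 0 := by simpa using hδ 1 1
    rw [this, h0]; simp [Fp_one]
  | hadd a b ha hb => intro x n; simp [Fp_add, ha, hb, mul_add, Finset.sum_add_distrib]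
  | hsmul c a ha => intro x n; simp [Fp_smul, ha, Finset.smul_sum]
  | hX a ha =>
    intro x n
    rw [hδ, hX, zero_mul, zero_add, Fp_X, ha, Finset.mul_sum]
    refine Finset.sum_congr rfl fun i _ => ?_
    rw [Fp_X, dbl_zero]; ring
  | hY a ha =>
    intro x n
    rw [hδ, hY, Fp_add, Fp_Xpow, Finset.sum_range_succ', Fp_Y_succ, dbl_shift_zero, add_comm]
    congr 1
    cases n with
    | zero => simp [Fp_Y_zero]
    | succ n =>
      rw [Fp_Y_succ, ha]
      refine Finset.sum_congr rfl fun i _ => ?_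
      rw [Fp_Y_succ, dbl_shift_succ]

/-- existence of the derivations -/
lemma exists_delta (q : FreeAlgebra K (Fin 2)) :
    ∃ δ : FreeAlgebra K (Fin 2) →ₗ[K] FreeAlgebra K (Fin 2),
      (∀ a b : FreeAlgebra K (Fin 2), δ (a * b) = δ a * b + a * δ b) ∧
      δ (FreeAlgebra.ι K 0) = 0 ∧ δ (FreeAlgebra.ι K 1) = q := by
  let A := FreeAlgebra K (Fin 2)
  let L : A →ₐ[K] TrivSqZeroExt A A := FreeAlgebra.lift K
    ![TrivSqZeroExt.inl (FreeAlgebra.ι K 0),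
      TrivSqZeroExt.inl (FreeAlgebra.ι K 1) + TrivSqZeroExt.inr q]
  have hL : ∀ a, (L a).fst = a := by
    have : (TrivSqZeroExt.fstHom K A A).comp L = AlgHom.id K A := by
      apply FreeAlgebra.hom_ext
      funext i
      fin_cases i <;> simp [L] <;> rfl
    intro a
    exact DFunLike.congr_fun this a
  refine ⟨{ toFun := fun a => (L a).snd, map_add' := fun a b => by simp, map_smul' := fun c a => by simp }, ?_, ?_, ?_⟩
  · intro a b
    change (L (a * b)).snd = (L a).snd * b + a * (L b).snd
    rw [map_mul, TrivSqZeroExt.snd_mul, hL, hL, add_comm]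
    rfl
  · change (L (FreeAlgebra.ι K 0)).snd = 0
    have e : L (FreeAlgebra.ι K 0) = TrivSqZeroExt.inl (FreeAlgebra.ι K 0) :=
      FreeAlgebra.lift_ι_apply _ _
    rw [e, TrivSqZeroExt.snd_inl]
  · change (L (FreeAlgebra.ι K 1)).snd = q
    have e : L (FreeAlgebra.ι K 1) =
        TrivSqZeroExt.inl (FreeAlgebra.ι K 1) + TrivSqZeroExt.inr q :=
      FreeAlgebra.lift_ι_apply _ _
    rw [e, TrivSqZeroExt.snd_add, TrivSqZeroExt.snd_inl, TrivSqZeroExt.snd_inr, zero_add]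

/-- words -/
noncomputable def wd : ℕ → (ℕ → ℕ) → FreeAlgebra K (Fin 2)
  | 0, a => FreeAlgebra.ι K 0 ^ a 0
  | n + 1, a => FreeAlgebra.ι K 0 ^ a 0 * (FreeAlgebra.ι K 1 * wd n (fun i => a (i + 1)))

/-- the reconstruction map -/
noncomputable def G (n : ℕ) : MvPolynomial ℕ K →ₗ[K] FreeAlgebra K (Fin 2) :=
  (basisMonomials ℕ K).constr K (fun a => wd n a)

lemma G_monomial (n : ℕ) (a : ℕ →₀ ℕ) : G n (monomial a (1 : K)) = wd n a := by
  have := (basisMonomials ℕ K).constr_basis K (fun a => (wd n a : FreeAlgebra K (Fin 2))) a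
  simpa [G] using this

lemma mono_ind {p : MvPolynomial ℕ K → Prop} (hm : ∀ a, p (monomial a 1))
    (hadd : ∀ a b, p a → p b → p (a + b)) (hsmul : ∀ (c : K) a, p a → p (c • a))
    (f : MvPolynomial ℕ K) : p f := by
  induction f using MvPolynomial.induction_on' with
  | monomial a b => simpa [MvPolynomial.smul_monomial] using hsmul b _ (hm a)
  | add f g hf hg => exact hadd _ _ hf hg

lemma G_X (n : ℕ) (f : MvPolynomial ℕ K) : G n (X 0 * f) = FreeAlgebra.ι K 0 * G n f := by
  induction f using mono_ind with
  | hm a =>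
    rw [X, monomial_mul, one_mul, G_monomial, G_monomial]
    cases n <;> simp [wd, pow_add, mul_assoc]
  | hadd a b ha hb => simp [mul_add, ha, hb]
  | hsmul c a ha => simp [ha]

lemma G_Xpow (n k : ℕ) (f : MvPolynomial ℕ K) :
    G n (X 0 ^ k * f) = FreeAlgebra.ι K 0 ^ k * G n f := by
  induction k with
  | zero => simp
  | succ m ih => rw [pow_succ', mul_assoc, G_X, ih, pow_succ', mul_assoc]

lemma G_Y (n : ℕ) (f : MvPolynomial ℕ K) :
    G (n + 1) (rename Nat.succ f) = FreeAlgebra.ι K 1 * G n f := by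
  induction f using mono_ind with
  | hm a =>
    rw [rename_monomial, G_monomial, G_monomial, wd]
    have h0 : (a.mapDomain Nat.succ) 0 = 0 :=
      Finsupp.mapDomain_of_notMem_range _ _ (by simp)
    have h1 : (fun i => (a.mapDomain Nat.succ) (i + 1)) = a := by
      funext i
      exact Finsupp.mapDomain_apply Nat.succ_injective a i
    rw [h0, h1]; simp
  | hadd a b ha hb => simp [mul_add, ha, hb]
  | hsmul c a ha => simp [ha]

lemma G_one : G 0 (1 : MvPolynomial ℕ K) = 1 := by
  have := G_monomial (K := K) 0 0
  simpa [wd] using this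

lemma recon (P : FreeAlgebra K (Fin 2)) :
    ∃ N0, ∀ N ≥ N0, P = ∑ n ∈ Finset.range N, G n (Fp P X n) := by
  induction P using left_ind with
  | h1 =>
    refine ⟨1, fun N hN => ?_⟩
    obtain ⟨N, rfl⟩ := Nat.exists_eq_add_of_le' hN
    rw [Finset.sum_range_succ']
    simp [Fp_one, G_one]
  | hadd a b ha hb =>
    obtain ⟨A, ha⟩ := ha
    obtain ⟨B, hb⟩ := hb
    refine ⟨max A B, fun N hN => ?_⟩
    simp only [Fp_add, map_add, Finset.sum_add_distrib]
    rw [← ha N (le_trans (le_max_left _ _) hN), ← hb N (le_trans (le_max_right _ _) hN)]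
  | hsmul c a ha =>
    obtain ⟨A, ha⟩ := ha
    refine ⟨A, fun N hN => ?_⟩
    simp only [Fp_smul, map_smul, ← Finset.smul_sum]
    rw [← ha N hN]
  | hX a ha =>
    obtain ⟨A, ha⟩ := ha
    refine ⟨A, fun N hN => ?_⟩
    simp only [Fp_X, G_X, ← Finset.mul_sum]
    rw [← ha N hN]
  | hY a ha =>
    obtain ⟨A, ha⟩ := ha
    refine ⟨A + 1, fun N hN => ?_⟩
    obtain ⟨N, rfl⟩ := Nat.exists_eq_add_of_le' (le_trans (Nat.le_add_left 1 A) hN)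
    rw [Finset.sum_range_succ', Fp_Y_zero, map_zero, add_zero]
    have : ∀ n, Fp a (fun i => (X (i + 1) : MvPolynomial ℕ K)) n = rename Nat.succ (Fp a X n) := by
      intro n
      rw [Fp_nat]; simp
    simp only [Fp_Y_succ, this, G_Y, ← Finset.mul_sum]
    rw [← ha N (by omega)]

/-- the product of consecutive differences -/
noncomputable def pr (n : ℕ) : MvPolynomial ℕ K := ∏ i ∈ Finset.range n, (X i - X (i + 1))

lemma G_pr (n : ℕ) : ∀ g : MvPolynomial ℕ K, G n (pr n * g) ∈
    Algebra.adjoin K ({FreeAlgebra.ι K 0, FreeAlgebra.ι K 1 * FreeAlgebra.ι K 0 -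
      FreeAlgebra.ι K 0 * FreeAlgebra.ι K 1} : Set (FreeAlgebra K (Fin 2))) := by
  set B := Algebra.adjoin K ({FreeAlgebra.ι K 0, FreeAlgebra.ι K 1 * FreeAlgebra.ι K 0 -
      FreeAlgebra.ι K 0 * FreeAlgebra.ι K 1} : Set (FreeAlgebra K (Fin 2))) with hB
  have hX : FreeAlgebra.ι K 0 ∈ B := Algebra.subset_adjoin (by simp)
  have hT : FreeAlgebra.ι K 1 * FreeAlgebra.ι K 0 -
      FreeAlgebra.ι K 0 * FreeAlgebra.ι K 1 ∈ B := Algebra.subset_adjoin (by simp)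
  induction n with
  | zero =>
    intro g
    induction g using mono_ind with
    | hm a => simpa [pr, G_monomial, wd] using pow_mem hX _
    | hadd a b ha hb => rw [mul_add, map_add]; exact add_mem ha hb
    | hsmul c a ha => rw [mul_smul_comm, map_smul]; exact B.smul_mem ha c
  | succ n ih =>
    intro g
    induction g using mono_ind with
    | hm a =>
      have e1 : monomial a (1 : K) = X 0 ^ (a 0) * rename Nat.succ
          (monomial (a.comapDomain Nat.succ Nat.succ_injective.injOn) (1 : K)) := by
        rw [rename_monomial, X_pow_eq_monomial, monomial_mul, one_mul]
        refine congrArg (fun b => monomial b (1 : K)) ?_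
        ext i
        cases i with
        | zero =>
          rw [Finsupp.add_apply, Finsupp.mapDomain_of_notMem_range _ _ (by simp)]; simp
        | succ i =>
          rw [Finsupp.add_apply, ← Nat.succ_eq_add_one,
            Finsupp.mapDomain_apply Nat.succ_injective]
          simp
      set g' := (monomial (a.comapDomain Nat.succ Nat.succ_injective.injOn) (1 : K))
      have e2 : (pr (n + 1) : MvPolynomial ℕ K) = (X 0 - X 1) * rename Nat.succ (pr n) := by
        simp only [pr, Finset.prod_range_succ', map_prod, map_sub, rename_X, Nat.succ_eq_add_one]
        ring
      have e3 : (pr (n + 1) : MvPolynomial ℕ K) * monomial a 1 =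
          X 0 ^ (a 0) * (X 0 * rename Nat.succ (pr n * g') - rename Nat.succ (X 0 * (pr n * g'))) := by
        rw [e1, e2]
        simp only [map_mul, rename_X, Nat.succ_eq_add_one]
        ring
      rw [e3, G_Xpow, map_sub, G_X, G_Y, G_Y, G_X]
      refine mul_mem (pow_mem hX _) ?_
      have := neg_mem (mul_mem hT (ih g'))
      convert this using 1
      noncomm_ring
    | hadd a b ha hb => rw [mul_add, map_add]; exact add_mem ha hb
    | hsmul c a ha => rw [mul_smul_comm, map_smul]; exact B.smul_mem ha c

lemma dvd_of_merge (k : ℕ) (g : MvPolynomial ℕ K) (h : aeval (dbl k X) g = (0 : MvPolynomial ℕ K)) :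
    (X k - X (k + 1)) ∣ g := by
  let I : Ideal (MvPolynomial ℕ K) := Ideal.span {X k - X (k + 1)}
  let u : MvPolynomial ℕ K →ₐ[K] MvPolynomial ℕ K :=
    aeval (fun j => if j ≤ k then X j else X (j + 1))
  have key : (Ideal.Quotient.mkₐ K I).comp (u.comp (aeval (dbl k X))) = Ideal.Quotient.mkₐ K I := by
    apply MvPolynomial.algHom_ext
    intro j
    simp only [AlgHom.comp_apply, aeval_X, dbl]
    rcases lt_trichotomy j (k + 1) with hj | rfl | hj
    · have : j ≤ k := by omega
      simp [this, u]
    · simp only [show ¬ (k + 1 ≤ k) by omega, if_false, u, Nat.add_sub_cancel, aeval_X, le_refl, if_true]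
      exact Ideal.Quotient.eq.2 (Ideal.subset_span rfl)
    · have h1 : ¬ j ≤ k := by omega
      have h2 : ¬ j - 1 ≤ k := by omega
      have h3 : j - 1 + 1 = j := by omega
      simp [h1, h2, h3, u]
  have := DFunLike.congr_fun key g
  simp only [AlgHom.comp_apply, h, map_zero] at this
  exact Ideal.mem_span_singleton.1 (Ideal.Quotient.eq_zero_iff_mem.1 this.symm)

lemma pr_dvd (n : ℕ) (f : MvPolynomial ℕ K)
    (h : ∀ k < n, aeval (dbl k X) f = (0 : MvPolynomial ℕ K)) : pr n ∣ f := by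
  induction n with
  | zero => simp [pr]
  | succ n ih =>
    obtain ⟨g, rfl⟩ := ih (fun k hk => h k (by omega))
    rw [pr, Finset.prod_range_succ]
    refine mul_dvd_mul_left _ (dvd_of_merge n g ?_)
    have := h n (by omega)
    rw [map_mul] at this
    refine (mul_eq_zero.1 this).resolve_left ?_
    rw [pr, map_prod]
    refine Finset.prod_ne_zero_iff.2 ?_
    intro i hi
    have hi := Finset.mem_range.1 hi
    simp only [map_sub, aeval_X, dbl, hi.le, if_true, show i + 1 ≤ n from hi]
    rw [sub_ne_zero]
    intro e
    have := X_injective e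
    omega

end DeltaConst


/-- If `P ∈ K⟨X,Y⟩` is killed by every derivation `δ_m` with `δ_m X = 0`,
`δ_m Y = Xᵐ`, then `P` lies in the subalgebra generated by `X` and
`T₁ = YX - XY`. -/
theorem constant_of_all_deltam_in_X_T1
    {K : Type*} [Field K] [CharZero K]
    (X Y : FreeAlgebra K (Fin 2))
    (hX : X = FreeAlgebra.ι K 0) (hY : Y = FreeAlgebra.ι K 1)
    (P : FreeAlgebra K (Fin 2))
    (h : ∀ (m : ℕ) (δ : FreeAlgebra K (Fin 2) →ₗ[K] FreeAlgebra K (Fin 2)),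
      (∀ a b : FreeAlgebra K (Fin 2), δ (a * b) = δ a * b + a * δ b) →
      δ X = 0 → δ Y = X ^ m → δ P = 0) :
    P ∈ Algebra.adjoin K ({X, Y * X - X * Y} : Set (FreeAlgebra K (Fin 2))) := by
  subst hX hY
  obtain ⟨N, hN⟩ := DeltaConst.recon P
  rw [hN N le_rfl]
  refine sum_mem fun n _ => ?_
  suffices H : DeltaConst.pr n ∣ DeltaConst.Fp P MvPolynomial.X n by
    obtain ⟨g, hg⟩ := H
    rw [hg]
    exact DeltaConst.G_pr n g
  apply DeltaConst.pr_dvd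
  intro k hk
  obtain ⟨n, rfl⟩ : ∃ l, n = l + 1 := ⟨n - 1, by omega⟩
  rw [DeltaConst.Fp_nat]
  simp only [MvPolynomial.aeval_X]
  have hv : ∀ m : ℕ, ∑ i : Fin (n + 1), (DeltaConst.Fp P (DeltaConst.dbl i MvPolynomial.X) (n + 1)) *
      (MvPolynomial.X (i : ℕ) : MvPolynomial ℕ K) ^ m = 0 := by
    intro m
    obtain ⟨δ, h1, h2, h3⟩ := DeltaConst.exists_delta (K := K) (FreeAlgebra.ι K 0 ^ m)
    have e := DeltaConst.Fp_delta m δ h1 h2 h3 P MvPolynomial.X n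
    rw [h m δ h1 h2 h3, Finset.sum_range] at e
    simp only [mul_comm _ (_ ^ m)]
    rw [← e]
    simp [DeltaConst.Fp]
  have := Matrix.eq_zero_of_forall_pow_sum_mul_pow_eq_zero
    (f := fun i : Fin (n + 1) => (MvPolynomial.X (i : ℕ) : MvPolynomial ℕ K))
    (v := fun i => DeltaConst.Fp P (DeltaConst.dbl i MvPolynomial.X) (n + 1))
    (fun i j e => Fin.ext (MvPolynomial.X_injective e)) (fun m => hv (m : ℕ))
  exact congrFun this ⟨k, hk⟩
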